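/- Orthogonality relation: let a, b, c, d, e, g ∈ ℂ \ (1/2)ℤ with b+d ∉ (1/2)ℤ and a+b−e, d+e−c, a+b−g, d+g−c ∈ {0,1,…,n−1}. Then Σ_f [2f+n¦2f+1]^{−1} · [2g+n¦2g+1]^{−1} · {a b e; d c f}_tet · {d b f; a c g}_tet = δ_{e,g} (Kronecker delta), where f ranges over the complex numbers with b+d−f ∈ {0,1,…,n−1} and a+f−c ∈ {0,1,…,n−1}. -/

import Mathlib

open Complex Finset Filter
open scoped Matrix Kronecker Real

noncomputable section

/-- `ξ^a = exp(π √-1 a / n)` for the `2n`-th root of unity `ξ = exp(π √-1/n)`. -/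
def xic (n : ℕ) (a : ℂ) : ℂ := Complex.exp (Real.pi * Complex.I * a / n)

/-- `{a} = ξ^a - ξ^{-a}`. -/
def qn (n : ℕ) (a : ℂ) : ℂ := xic n a - xic n (-a)

/-- `{k}! = {1}{2}⋯{k}`. -/
def qfac (n : ℕ) (k : ℕ) : ℂ := ∏ j ∈ Finset.range k, qn n ((j : ℂ) + 1)

-- The quantum binomial `[a¦b]`, defined (and nonzero) only when `a - b ∈ {0,1,…,n-1}`.
open Classical in
def qbin (n : ℕ) (a b : ℂ) : ℂ :=
  if h : ∃ k : ℕ, k < n ∧ a - b = (k : ℂ) then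
    ∏ j ∈ Finset.range h.choose, qn n (a - (j : ℂ)) / qn n (a - b - (j : ℂ))
  else 0

/-- `[a] = {a}/{1}`. -/
def qint (n : ℕ) (a : ℂ) : ℂ := qn n a / qn n 1

/-- `a` is not a half-integer. -/
def NotHalfInt (a : ℂ) : Prop := ∀ m : ℤ, a ≠ (m : ℂ) / 2

/-- `x ∈ {0, 1, …, n-1}` (as a complex number). -/
def InZn (n : ℕ) (x : ℂ) : Prop := ∃ k : ℕ, k < n ∧ x = (k : ℂ)

/-- The matrix of `E` on `V^a = ℂ^n`: `E e_j = [j] e_{j-1}` (independent of `a`). -/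
def Emat (n : ℕ) : Matrix (Fin n) (Fin n) ℂ :=
  Matrix.of fun i j => if (j : ℕ) = (i : ℕ) + 1 then qint n ((j : ℕ) : ℂ) else 0

/-- The matrix of `F` on `V^a`: `F e_j = [2a-j] e_{j+1}` (with `e_n = 0`). -/
def Fmat (n : ℕ) (a : ℂ) : Matrix (Fin n) (Fin n) ℂ :=
  Matrix.of fun i j => if (i : ℕ) = (j : ℕ) + 1 then qint n (2 * a - ((j : ℕ) : ℂ)) else 0

/-- The matrix of `K` on `V^a`: `K e_j = ξ^{a-j} e_j`. -/
def Kmat (n : ℕ) (a : ℂ) : Matrix (Fin n) (Fin n) ℂ :=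
  Matrix.of fun i j => if i = j then xic n (a - ((i : ℕ) : ℂ)) else 0

/-- The matrix of `K⁻¹` on `V^a`. -/
def Kinvmat (n : ℕ) (a : ℂ) : Matrix (Fin n) (Fin n) ℂ :=
  Matrix.of fun i j => if i = j then xic n (-(a - ((i : ℕ) : ℂ))) else 0

/-- The `R`-matrix `R_{a,b} : V^a ⊗ V^b → V^b ⊗ V^a`:
`R(e_u ⊗ e_v) = Σ_m {m}! ξ^{2(a-u)(b-v) - m(a-b-u+v) - m(m+1)/2} [u¦u-m] [2b-v¦2b-v-m]
e_{v+m} ⊗ e_{u-m}`; the entry at row `(h,k)`, column `(u,v)` is the coefficient of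
`e_h ⊗ e_k`, nonzero only when `h + k = u + v` and `h ≥ v` (with `m = h - v`). -/
def Rmat (n : ℕ) (a b : ℂ) : Matrix (Fin n × Fin n) (Fin n × Fin n) ℂ :=
  Matrix.of fun p q =>
    if ((p.1 : ℕ) + (p.2 : ℕ) = (q.1 : ℕ) + (q.2 : ℕ)) ∧ ((q.2 : ℕ) ≤ (p.1 : ℕ)) then
      (fun m : ℕ =>
        qfac n m *
        xic n (2 * (a - ((q.1 : ℕ) : ℂ)) * (b - ((q.2 : ℕ) : ℂ))
            - (m : ℂ) * (a - b - ((q.1 : ℕ) : ℂ) + ((q.2 : ℕ) : ℂ))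
            - (m : ℂ) * ((m : ℂ) + 1) / 2) *
        qbin n ((q.1 : ℕ) : ℂ) (((q.1 : ℕ) : ℂ) - (m : ℂ)) *
        qbin n (2 * b - ((q.2 : ℕ) : ℂ)) (2 * b - ((q.2 : ℕ) : ℂ) - (m : ℂ)))
      ((p.1 : ℕ) - (q.2 : ℕ))
    else 0

/-- The Clebsch-Gordan quantum coefficient `C^{a,b,c}_{u,v,t}`. -/
def CG (n : ℕ) (a b c : ℂ) (u v t : ℕ) : ℂ :=
  Complex.exp (Real.pi * Complex.I * (c - a - b) / 2) *
  (-1 : ℂ) ^ ((v : ℤ) - (t : ℤ)) *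
  xic n (((v : ℂ) * (2 * b - (v : ℂ) + 1) - (u : ℂ) * (2 * a - (u : ℂ) + 1)) / 2) *
  (qbin n (2 * c) (2 * c - (t : ℂ)))⁻¹ *
  qbin n (2 * c) (a + b + c - ((n : ℂ) - 1)) *
  ∑ z ∈ Finset.range (t + 1),
    (-1 : ℂ) ^ z * xic n ((2 * (z : ℂ) - (t : ℂ)) * (2 * c - (t : ℂ) + 1) / 2) *
    qbin n (a + b - c) ((u : ℂ) - (z : ℂ)) *
    qbin n (2 * a - (u : ℂ) + (z : ℂ)) (2 * a - (u : ℂ)) *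
    qbin n (2 * b - (v : ℂ) + ((t : ℂ) - (z : ℂ))) (2 * b - (v : ℂ))

-- The inclusion `Y_c^{a,b} : V^c → V^a ⊗ V^b`.
open Classical in
def Yinc (n : ℕ) (a b c : ℂ) : Matrix (Fin n × Fin n) (Fin n) ℂ :=
  Matrix.of fun p t =>
    if ((p.1 : ℕ) : ℂ) + ((p.2 : ℕ) : ℂ) - ((t : ℕ) : ℂ) = a + b - c then
      CG n a b c (p.1 : ℕ) (p.2 : ℕ) (t : ℕ)
    else 0

-- The projection `Y_{a,b}^c : V^a ⊗ V^b → V^c`.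
open Classical in
def Yproj (n : ℕ) (a b c : ℂ) : Matrix (Fin n) (Fin n × Fin n) ℂ :=
  Matrix.of fun t p =>
    if ((p.1 : ℕ) : ℂ) + ((p.2 : ℕ) : ℂ) - ((t : ℕ) : ℂ) = a + b - c then
      CG n ((n : ℂ) - 1 - b) ((n : ℂ) - 1 - a) ((n : ℂ) - 1 - c)
        (n - 1 - (p.2 : ℕ)) (n - 1 - (p.1 : ℕ)) (n - 1 - (t : ℕ))
    else 0

-- Extracts the natural number `k` with `x = k` (0 if there is none).
open Classical in
def natIdx (x : ℂ) : ℕ := if h : ∃ k : ℕ, x = (k : ℂ) then h.choose else 0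

/-- The `SL(2,ℂ)` quantum 6j-symbol `{a b e; d c f}_ξ`. -/
def sixj (n : ℕ) (a b e d c f : ℂ) : ℂ :=
  (-1 : ℂ) ^ (n - 1 + natIdx (a + f - c)) *
  (qbin n (2 * f + (n : ℂ)) (2 * f + 1))⁻¹ *
  (qfac n (natIdx (d + e - c)) * qfac n (natIdx (a + b - e)) /
    (qfac n (natIdx (b + d - f)) * qfac n (natIdx (a + f - c)))) *
  qbin n (2 * e) (a + b + e + 1 - (n : ℂ)) *
  (qbin n (2 * e) (e + c - d))⁻¹ *
  ∑ z ∈ Finset.Icc (natIdx (d + e - c) - natIdx (b + d - f))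
      (min (natIdx (d + e - c)) (natIdx (a + f - c))),
    (-1 : ℂ) ^ z * qbin n (a + f + c + 1) (2 * c + (z : ℂ) + 1) *
    qbin n ((a + c - f) + (z : ℂ)) (a + c - f) *
    qbin n ((b + f - d) + (d + e - c) - (z : ℂ)) (b + f - d) *
    qbin n ((d + c - e) + (z : ℂ)) (d + f - b)

/-- The tetrahedral symbol `{a b e; d c f}_tet = {a b e; d c f}_ξ · [2f+n¦2f+1]`. -/
def sixjtet (n : ℕ) (a b e d c f : ℂ) : ℂ :=
  sixj n a b e d c f * qbin n (2 * f + (n : ℂ)) (2 * f + 1)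

/-- The Lobachevsky function `Λ(x) = -∫_0^x log|2 sin t| dt`. -/
def lob (x : ℝ) : ℝ := -∫ t in (0 : ℝ)..x, Real.log |2 * Real.sin t|

/-- A triple of integers is admissible. -/
def Admissible (n : ℕ) (i j k : ℤ) : Prop :=
  0 < i ∧ 0 < j ∧ 0 < k ∧ i < (n : ℤ) - 1 ∧ j < (n : ℤ) - 1 ∧ k < (n : ℤ) - 1 ∧
  (n : ℤ) - 1 < i + j + k ∧ i + j + k < 2 * ((n : ℤ) - 1) ∧
  0 < i + j - k ∧ 0 < j + k - i ∧ 0 < k + i - j ∧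
  i + j - k < (n : ℤ) - 1 ∧ j + k - i < (n : ℤ) - 1 ∧ k + i - j < (n : ℤ) - 1

/-!
Fix `a, b, c, d`. The 6j-symbols `{a b e; d c f}_tet`, with rows `e` and columns `f`, form a matrix
that factors, up to diagonal matrices, as an inverse Bailey matrix times a diagonal matrix times a
Bailey matrix: the sum in the 6j-symbol is a terminating balanced `₄φ₃`, and it is brought to this
form by Sears' transformation, that is, by interchanging two summations each of which is evaluated
by the `q`-Saalschütz formula. Exchanging `a` and `d` inverts the diagonal matrix and interchanges
the parameters of the two Bailey matrices, so it produces the inverse matrix, and orthogonality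
reduces to the Bailey inversion.

At a root of unity this needs all denominators to be nonzero, hence `2a, 2c, 2d ∉ ℤ`. The terms of
the orthogonality relation are continuous along the line `(a + t, b - t, c + t, d + t)`, on which
`e`, `f`, `g` and all the integers between them stay fixed, and this removes these conditions.
-/

/-! ### Quantum numbers -/

lemma xic_add (n : ℕ) (x y : ℂ) : xic n (x + y) = xic n x * xic n y := by
  simp only [xic, ← Complex.exp_add, mul_add, add_div]

lemma xic_neg (n : ℕ) (x : ℂ) : xic n (-x) = (xic n x)⁻¹ := by
  simp only [xic, ← Complex.exp_neg, mul_neg, neg_div]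

lemma xic_sub (n : ℕ) (x y : ℂ) : xic n (x - y) = xic n x * (xic n y)⁻¹ := by
  rw [sub_eq_add_neg, xic_add, xic_neg]

@[simp] lemma xic_ne_zero (n : ℕ) (x : ℂ) : xic n x ≠ 0 := Complex.exp_ne_zero _

lemma xic_natCast_self (n : ℕ) [NeZero n] : xic n n = -1 := by
  rw [xic, mul_div_cancel_right₀ _ (NeZero.ne _), Complex.exp_pi_mul_I]

lemma qn_neg (n : ℕ) (x : ℂ) : qn n (-x) = -qn n x := by
  simp only [qn, neg_neg, neg_sub]

lemma qn_zero (n : ℕ) : qn n 0 = 0 := by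
  simp [qn]

lemma qn_add_natCast_self (n : ℕ) [NeZero n] (x : ℂ) : qn n (x + n) = -qn n x := by
  simp only [qn, neg_add, xic_add, xic_neg, xic_natCast_self]
  ring_nf

lemma qn_eq_zero_iff (n : ℕ) [NeZero n] {x : ℂ} : qn n x = 0 ↔ ∃ m : ℤ, x = m * n := by
  have hn : (n : ℂ) ≠ 0 := NeZero.ne _
  have hπ : (Real.pi : ℂ) * Complex.I ≠ 0 := by simp [Real.pi_ne_zero]
  rw [qn, xic, xic, sub_eq_zero, Complex.exp_eq_exp_iff_exists_int]
  refine exists_congr fun m => ⟨fun h => mul_left_cancel₀ (mul_ne_zero hπ two_ne_zero) ?_, ?_⟩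
  · field_simp at h
    linear_combination (Real.pi : ℂ) * Complex.I * h
  · rintro rfl
    field_simp
    ring

lemma qn_ne_zero (n : ℕ) [NeZero n] {x : ℂ} (hx : x ∈ integerComplement) : qn n x ≠ 0 := by
  rw [Ne, qn_eq_zero_iff]
  rintro ⟨m, rfl⟩
  exact hx ⟨m * n, by push_cast; rfl⟩

lemma qn_natCast_ne_zero {n k : ℕ} (hk : 0 < k) (hkn : k < n) : qn n k ≠ 0 := by
  have : NeZero n := ⟨by omega⟩
  rw [Ne, qn_eq_zero_iff]
  rintro ⟨m, hm⟩
  have hm' : (k : ℤ) = m * n := by exact_mod_cast hm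
  have := Int.le_of_dvd (by omega) (Dvd.intro_left m hm'.symm)
  omega

lemma qn_succ_ne_zero {n k : ℕ} (hk : k + 1 < n) : qn n (k + 1) ≠ 0 := by
  exact_mod_cast qn_natCast_ne_zero k.succ_pos hk

/-! ### Quantum shifted factorials -/

/-- The rising shifted factorial `{x}{x+1}⋯{x+m-1}`. -/
def qRising (n : ℕ) (x : ℂ) (m : ℕ) : ℂ := ∏ i ∈ range m, qn n (x + i)

/-- The falling shifted factorial `{x}{x-1}⋯{x-m+1}`, written `{x, x-m}` in the paper. -/
def qFalling (n : ℕ) (x : ℂ) (m : ℕ) : ℂ := ∏ i ∈ range m, qn n (x - i)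

section ShiftedFactorials

variable (n : ℕ) (x : ℂ)

@[simp] lemma qRising_zero : qRising n x 0 = 1 := prod_range_zero _

lemma qRising_succ (m : ℕ) : qRising n x (m + 1) = qRising n x m * qn n (x + m) :=
  prod_range_succ _ m

lemma qRising_add (m l : ℕ) : qRising n x (m + l) = qRising n x m * qRising n (x + m) l := by
  simp only [qRising, prod_range_add, Nat.cast_add, add_assoc]

lemma qRising_succ' (m : ℕ) : qRising n x (m + 1) = qn n x * qRising n (x + 1) m := by
  rw [add_comm, qRising_add, qRising_succ]
  simp

lemma qRising_ne_zero [NeZero n] {x : ℂ} (hx : x ∈ integerComplement) (m : ℕ) :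
    qRising n x m ≠ 0 :=
  prod_ne_zero_iff.2 fun i _ =>
    qn_ne_zero n (by exact_mod_cast (add_intCast_mem_integerComplement i).2 hx)

lemma qRising_eq_zero {x : ℂ} {m i : ℕ} (hi : i < m) (hx : x = -i) : qRising n x m = 0 :=
  prod_eq_zero (mem_range.2 hi) (by rw [hx, neg_add_cancel, qn_zero])

lemma qRising_add_natCast_self [NeZero n] (m : ℕ) :
    qRising n (x + n) m = (-1) ^ m * qRising n x m := by
  simp only [qRising, add_right_comm x (n : ℂ), qn_add_natCast_self, prod_neg, card_range]

@[simp] lemma qFalling_zero : qFalling n x 0 = 1 := prod_range_zero _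

lemma qFalling_eq_qRising (m : ℕ) : qFalling n x m = qRising n (x - m + 1) m := by
  rw [qFalling, qRising, ← prod_range_reflect]
  refine prod_congr rfl fun i hi => ?_
  rw [Nat.sub_sub, Nat.cast_sub (by grind)]
  push_cast
  ring_nf

lemma qFalling_add (m l : ℕ) : qFalling n x (m + l) = qFalling n x m * qFalling n (x - m) l := by
  simp only [qFalling, prod_range_add, Nat.cast_add, sub_sub]

lemma qFalling_ne_zero [NeZero n] {x : ℂ} (hx : x ∈ integerComplement) (m : ℕ) :
    qFalling n x m ≠ 0 := by
  rw [qFalling_eq_qRising, show x - m + 1 = x + ((1 - m : ℤ) : ℂ) by push_cast; ring]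
  exact qRising_ne_zero n ((add_intCast_mem_integerComplement _).2 hx) m

lemma qRising_neg (m : ℕ) : qRising n (-x) m = (-1) ^ m * qFalling n x m := by
  induction m with
  | zero => simp
  | succ m ih =>
    rw [qRising_succ, qFalling_add, ih, show -x + (m : ℂ) = -(x - m) by ring, qn_neg]
    simp only [qFalling, prod_range_one, Nat.cast_zero, sub_zero]
    ring

end ShiftedFactorials

/-! ### Quantum factorials -/

@[simp] lemma qfac_zero (n : ℕ) : qfac n 0 = 1 := prod_range_zero _

lemma qfac_eq_qRising (n m : ℕ) : qfac n m = qRising n 1 m := by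
  simp only [qfac, qRising, add_comm]

lemma qfac_succ (n m : ℕ) : qfac n (m + 1) = qfac n m * qn n (m + 1) :=
  prod_range_succ _ m

lemma qfac_add (n m l : ℕ) : qfac n (m + l) = qfac n m * qRising n (m + 1) l := by
  rw [qfac_eq_qRising, qfac_eq_qRising, qRising_add, add_comm (1 : ℂ)]

lemma qfac_ne_zero {n m : ℕ} (hm : m < n) : qfac n m ≠ 0 :=
  prod_ne_zero_iff.2 fun i hi => qn_succ_ne_zero (by grind)

lemma qfac_eq_zero {n m : ℕ} [NeZero n] (hm : n ≤ m) : qfac n m = 0 := by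
  refine prod_eq_zero (i := n - 1) (by have := NeZero.pos n; grind) ?_
  rw [Nat.cast_sub NeZero.one_le, Nat.cast_one, sub_add_cancel, ← zero_add (n : ℂ),
    qn_add_natCast_self, qn_zero, neg_zero]

lemma qFalling_natCast_self (n m : ℕ) : qFalling n m m = qfac n m := by
  rw [qFalling_eq_qRising, sub_self, zero_add, qfac_eq_qRising]

lemma qfac_sub_mul_qfac {n m : ℕ} (hm : m < n) :
    qfac n (n - 1 - m) * qfac n m = qfac n (n - 1) := by
  have : NeZero n := ⟨by omega⟩
  obtain ⟨r, hr⟩ : ∃ r, n = r + 1 + m := ⟨n - 1 - m, by omega⟩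
  have hreflect : qRising n (r + 1) m = qfac n m := by
    have hcast : (r : ℂ) + 1 = -m + n := by rw [hr]; push_cast; ring
    rw [hcast, qRising_add_natCast_self, qRising_neg, qFalling_natCast_self, ← mul_assoc,
      ← mul_pow]
    norm_num
  rw [show n - 1 - m = r by omega, show n - 1 = r + m by omega, qfac_add, hreflect]

/-! ### Quantum binomials -/

lemma natIdx_eq {x : ℂ} {k : ℕ} (hx : x = k) : natIdx x = k := by
  have hex : ∃ k : ℕ, x = k := ⟨k, hx⟩
  rw [natIdx, dif_pos hex]
  exact_mod_cast hex.choose_spec.symm.trans hx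

lemma qbin_eq_qFalling_div {n k : ℕ} {x y : ℂ} (hk : k < n) (hxy : x - y = k) :
    qbin n x y = qFalling n x k / qfac n k := by
  have hex : ∃ k : ℕ, k < n ∧ x - y = k := ⟨k, hk, hxy⟩
  have hchoose : hex.choose = k := by exact_mod_cast hex.choose_spec.2.symm.trans hxy
  rw [qbin, dif_pos hex, hchoose, hxy, prod_div_distrib, ← qFalling_natCast_self]
  rfl

lemma qbin_eq_qRising_div {n k : ℕ} {x y : ℂ} (hk : k < n) (hxy : x - y = k) :
    qbin n x y = qRising n (y + 1) k / qfac n k := by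
  rw [qbin_eq_qFalling_div hk hxy, qFalling_eq_qRising, ← hxy, sub_sub_cancel]

lemma qbin_add_natCast_self (n : ℕ) [NeZero n] (x : ℂ) :
    qbin n (x + n) (x + 1) = qRising n (x + 2) (n - 1) / qfac n (n - 1) := by
  rw [qbin_eq_qRising_div (Nat.sub_one_lt (NeZero.ne n)), add_assoc, one_add_one_eq_two]
  rw [Nat.cast_sub NeZero.one_le]
  push_cast
  ring

lemma qbin_add_natCast_self_ne_zero (n : ℕ) [NeZero n] {x : ℂ} (hx : x ∈ integerComplement) :
    qbin n (x + n) (x + 1) ≠ 0 := by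
  rw [qbin_add_natCast_self]
  refine div_ne_zero (qRising_ne_zero n ?_ _) (qfac_ne_zero (Nat.sub_one_lt (NeZero.ne n)))
  exact_mod_cast (add_intCast_mem_integerComplement 2).2 hx

/-! ### Inverse factorials of a difference -/

/-- The inverse factorial `1/{m-k}!`, extended by zero to `m < k`. -/
def invFacSub (n m k : ℕ) : ℂ := if k ≤ m then (qfac n (m - k))⁻¹ else 0

section InvFacSub

variable {n m k : ℕ}

lemma invFacSub_of_lt (h : m < k) : invFacSub n m k = 0 := if_neg h.not_ge

lemma invFacSub_add_left (n k l : ℕ) : invFacSub n (k + l) k = (qfac n l)⁻¹ := by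
  simp [invFacSub]

lemma invFacSub_eq (l : ℕ) (h : m = k + l) : invFacSub n m k = (qfac n l)⁻¹ := by
  rw [h, invFacSub_add_left]

lemma qRising_neg_natCast (hk : k < n) (z : ℕ) :
    qRising n (-k) z = (-1) ^ z * qfac n k * invFacSub n k z := by
  obtain hkz | hzk := lt_or_ge k z
  · rw [invFacSub_of_lt hkz, mul_zero, qRising_eq_zero n hkz rfl]
  · obtain ⟨l, rfl⟩ := exists_add_of_le hzk
    have hl : qfac n l ≠ 0 := qfac_ne_zero (by omega)
    rw [invFacSub_add_left, qRising_neg, qFalling_eq_qRising, add_comm z l, qfac_add]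
    push_cast
    field_simp
    ring_nf

lemma qRising_mul_invFacSub (x : ℕ) (h : m + x < n + k) :
    qRising n (m + 1 - k) x * invFacSub n (m + x) k = invFacSub n m k := by
  obtain hmx | hmx := lt_or_ge (m + x) k
  · rw [invFacSub_of_lt hmx, invFacSub_of_lt (by omega), mul_zero]
  obtain hm | hm := lt_or_ge m k
  · rw [invFacSub_of_lt hm, qRising_eq_zero n (i := k - m - 1) (by omega), zero_mul]
    rw [Nat.sub_sub, Nat.cast_sub (by omega)]
    push_cast
    ring
  · obtain ⟨l, rfl⟩ := exists_add_of_le hm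
    have hlx : qfac n (l + x) ≠ 0 := qfac_ne_zero (by omega)
    have hl : qfac n l ≠ 0 := qfac_ne_zero (by omega)
    rw [invFacSub_add_left, add_assoc, invFacSub_add_left, mul_inv_eq_iff_eq_mul₀ hlx, qfac_add,
      inv_mul_cancel_left₀ hl]
    push_cast
    ring_nf

end InvFacSub

/-! ### The `q`-Saalschütz summation -/

lemma sum_antidiagonal_succ_eq_sum_add {M : Type*} [AddCommMonoid M] {m : ℕ} {F P Q : ℕ → ℕ → M}
    (hleft : F 0 (m + 1) = Q 0 m) (hright : F (m + 1) 0 = P m 0)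
    (hmid : ∀ i l, i + l + 1 = m → F (i + 1) (l + 1) = P i (l + 1) + Q (i + 1) l) :
    ∑ x ∈ antidiagonal (m + 1), F x.1 x.2 = ∑ x ∈ antidiagonal m, (P x.1 x.2 + Q x.1 x.2) := by
  obtain _ | m := m
  · simp [Nat.sum_antidiagonal_succ, hleft, hright, add_comm]
  rw [sum_add_distrib, Nat.sum_antidiagonal_succ, Nat.sum_antidiagonal_succ', hleft, hright,
    Nat.sum_antidiagonal_succ', Nat.sum_antidiagonal_succ (f := fun x => Q x.1 x.2),
    sum_congr rfl fun x hx => hmid x.1 x.2 (by simpa using hx), sum_add_distrib]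
  abel

lemma qn_add_mul_qn (n : ℕ) (γ z w : ℂ) :
    qn n (z + w) * qn n (γ + z + w) = qn n z * qn n (γ + z) + qn n w * qn n (γ + 2 * z + w) := by
  simp only [qn, xic_neg, xic_add, two_mul]
  field_simp
  ring

lemma qn_mul_qn_add_qn_mul_qn (n : ℕ) (α β γ z w : ℂ) :
    qn n (α + z) * qn n (β + z) + qn n (γ - α - β + w) * qn n (γ + 2 * z + w) =
      qn n (γ - α + (z + w)) * qn n (γ - β + (z + w)) := by
  simp only [qn, xic_neg, xic_add, xic_sub, two_mul]
  field_simp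
  ring

/-- The summand of the `q`-Saalschütz sum, cleared of the denominator `(γ; q)_z`. -/
def saalschutzTerm (n : ℕ) (α β γ : ℂ) (z w : ℕ) : ℂ :=
  qRising n α z * qRising n β z * qRising n (γ + z) w * qRising n (γ - α - β) w /
    (qfac n z * qfac n w)

lemma sum_saalschutzTerm_succ {n m : ℕ} (α β γ : ℂ) (hm : m + 1 < n) :
    qn n (m + 1) * ∑ x ∈ antidiagonal (m + 1), saalschutzTerm n α β γ x.1 x.2 =
      qn n (γ - α + m) * qn n (γ - β + m) *
        ∑ x ∈ antidiagonal m, saalschutzTerm n α β γ x.1 x.2 := by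
  have hm' := qn_succ_ne_zero hm
  rw [mul_sum, mul_sum, sum_antidiagonal_succ_eq_sum_add
    (F := fun z w => qn n (m + 1) * saalschutzTerm n α β γ z w)
    (P := fun z w => qn n (α + z) * qn n (β + z) * saalschutzTerm n α β γ z w)
    (Q := fun z w => qn n (γ - α - β + w) * qn n (γ + 2 * z + w) * saalschutzTerm n α β γ z w)]
  · refine sum_congr rfl fun x hx => ?_
    have hx : (m : ℂ) = x.1 + x.2 := by exact_mod_cast (mem_antidiagonal.1 hx).symm
    rw [← add_mul, qn_mul_qn_add_qn_mul_qn, hx]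
  · simp only [saalschutzTerm, qRising_zero, qRising_succ, qfac_zero, qfac_succ,
      CharP.cast_eq_zero, add_zero, mul_zero, mul_one, one_mul]
    field_simp
  · simp only [saalschutzTerm, qRising_zero, qRising_succ, qfac_zero, qfac_succ, mul_one,
      Nat.cast_add, Nat.cast_one]
    field_simp
  · rintro z w rfl
    have hz := qn_succ_ne_zero (n := n) (k := z) (by omega)
    have hw := qn_succ_ne_zero (n := n) (k := w) (by omega)
    have hsplit : qn n (z + w + 1 + 1) * qn n (γ + (z + 1) + w) =
        qn n (z + 1) * qn n (γ + z) + qn n (w + 1) * qn n (γ + 2 * (z + 1) + w) := by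
      convert qn_add_mul_qn n (γ - 1) (z + 1) (w + 1) using 3 <;> ring_nf
    simp only [saalschutzTerm, qRising_succ n α, qRising_succ n β, qfac_succ,
      qRising_succ' n (γ + z), qRising_succ n (γ + (z + 1 : ℕ)), qRising_succ n (γ - α - β)]
    push_cast
    rw [add_assoc γ z 1]
    field_simp
    rw [mul_comm _ (2 : ℂ)]
    linear_combination qRising n α z * qn n (α + z) * qRising n β z * qn n (β + z) *
      qRising n (γ + (z + 1)) w * qRising n (γ - α - β) w * qn n (γ - α - β + w) /
        (qfac n z * qfac n w) * hsplit

lemma sum_saalschutzTerm {n m : ℕ} (α β γ : ℂ) (hm : m < n) :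
    ∑ x ∈ antidiagonal m, saalschutzTerm n α β γ x.1 x.2 =
      qRising n (γ - α) m * qRising n (γ - β) m / qfac n m := by
  induction m with
  | zero => simp [saalschutzTerm]
  | succ m ih =>
    have hm' := qn_succ_ne_zero hm
    rw [← mul_right_inj' hm', sum_saalschutzTerm_succ α β γ hm, ih (by omega), qRising_succ,
      qRising_succ, qfac_succ]
    field_simp

lemma sum_saalschutz_div {n m : ℕ} (α : ℂ) {γ D : ℂ} (hγ : γ ∈ integerComplement)
    (hD : D ∈ integerComplement) (hm : m < n) :
    ∑ x ∈ antidiagonal m, qRising n α x.1 * qRising n (γ - α - D + m - 1) x.2 /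
        (qfac n x.1 * qfac n x.2 * qRising n γ x.1 * qFalling n D x.2) =
      qRising n (γ - α) m * qRising n (γ - D + m - 1) m /
        (qfac n m * qRising n γ m * qFalling n D m) := by
  have : NeZero n := ⟨by omega⟩
  have hRγ := qRising_ne_zero n hγ
  have hFD := qFalling_ne_zero n hD
  have hsum := sum_saalschutzTerm α (D - m + 1) γ hm
  rw [show γ - (D - m + 1) = γ - D + m - 1 by ring] at hsum
  rw [mul_assoc (qfac n m), ← div_div, ← hsum, sum_div]
  refine sum_congr rfl fun x hx => ?_
  obtain ⟨s, t⟩ := x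
  obtain rfl : s + t = m := by simpa using hx
  have hs : qfac n s ≠ 0 := qfac_ne_zero (by omega)
  have ht : qfac n t ≠ 0 := qfac_ne_zero (by omega)
  have hfall : qFalling n D (s + t) = qFalling n D t * qRising n (D - (s + t : ℕ) + 1) s := by
    rw [add_comm s t, qFalling_add, qFalling_eq_qRising n (D - t)]
    push_cast
    ring_nf
  have hβ : γ - α - D + (s + t : ℕ) - 1 = γ - α - (D - (s + t : ℕ) + 1) := by ring
  have hrise := hFD (s + t)
  rw [hfall] at hrise
  have hRγt := hRγ (s + t)
  rw [qRising_add] at hRγt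
  have hfall_right := right_ne_zero_of_mul hrise
  have hrise_right := right_ne_zero_of_mul hRγt
  rw [saalschutzTerm, hfall, hβ, qRising_add n γ]
  field_simp

/-! ### The Sears transformation -/

lemma sum_antidiagonal_fst_antidiagonal {M : Type*} [AddCommMonoid M] (f : ℕ → ℕ → ℕ → M)
    (m : ℕ) :
    ∑ x ∈ antidiagonal m, ∑ y ∈ antidiagonal x.1, f y.1 y.2 x.2 =
      ∑ x ∈ antidiagonal m, ∑ y ∈ antidiagonal x.2, f x.1 y.1 y.2 := by
  rw [sum_sigma', sum_sigma']
  refine sum_nbij' (fun x => ⟨(x.2.1, x.2.2 + x.1.2), (x.2.2, x.1.2)⟩)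
    (fun x => ⟨(x.1.1 + x.2.1, x.2.2), (x.1.1, x.2.1)⟩) ?_ ?_ ?_ ?_ ?_ <;>
  · simp only [mem_sigma, Sigma.forall, Prod.forall, HasAntidiagonal.mem_antidiagonal]
    grind

lemma invFacSub_mul_qRising_eq_sum {n k z : ℕ} (A : ℂ) (p : ℕ) (hk : k < n) (hz : z < n)
    (hpz : p + z < n + k) :
    (-1) ^ z * qfac n k * invFacSub n k z * qRising n (A - k + 1) z / qfac n z *
        invFacSub n (p + z) k =
      ∑ x ∈ antidiagonal z, qRising n (p - A) x.1 * qRising n (p + 1) x.1 *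
        qRising n (A - k - p) x.2 * invFacSub n (p + x.1) k / (qfac n x.1 * qfac n x.2) := by
  have hsum := sum_saalschutzTerm (p - A) (p + 1) (p + 1 - k) hz
  rw [show (p : ℂ) + 1 - k - (p - A) = A - k + 1 by ring,
    show (p : ℂ) + 1 - k - (p + 1) = -k by ring, qRising_neg_natCast hk] at hsum
  rw [mul_comm _ (qRising n (A - k + 1) z), ← hsum, sum_mul]
  refine sum_congr rfl fun x hx => ?_
  obtain ⟨y, s⟩ := x
  obtain rfl : y + s = z := by simpa using hx
  rw [saalschutzTerm, ← qRising_mul_invFacSub (m := p + y) s (by omega), ← add_assoc p y s]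
  push_cast
  rw [show (p : ℂ) + 1 - k + y = p + y + 1 - k by ring,
    show (p : ℂ) + 1 - k - (p - A) - (p + 1) = A - k - p by ring]
  ring

/-- The Racah sum: the sum over `z` in the 6j-symbol, with `A = 2a`, `B = 2b`, `C = 2c`,
`D = 2d` and its shifted factorials normalized to depend on `z` and `x = q - z` only. -/
def racahSum (n : ℕ) (A B C D : ℂ) (p q j k : ℕ) : ℂ :=
  ∑ x ∈ antidiagonal q, (-1) ^ x.1 * invFacSub n k x.1 * invFacSub n (p + x.1) k *
    (qRising n (A - k + 1) x.1 / qfac n x.1) * (qRising n (B - j + 1) x.2 / qfac n x.2) /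
      (qRising n (C + 2) x.1 * qFalling n D x.2)

lemma qfac_mul_racahSum_eq_sum_sum {n p q j k : ℕ} (A B C D : ℂ) (hq : q < n) (hj : j < n)
    (hk : k < n) (hN : p + q = j + k) :
    qfac n k * racahSum n A B C D p q j k =
      ∑ x ∈ antidiagonal q, ∑ y ∈ antidiagonal x.2,
        qRising n (p - A) x.1 * qRising n (p + 1) x.1 * invFacSub n (p + x.1) k /
            (qfac n x.1 * qRising n (C + 2) x.1) *
          (qRising n (A - k - p) y.1 * qRising n (B - j + 1) y.2 /
            (qfac n y.1 * qfac n y.2 * qRising n (C + 2 + x.1) y.1 * qFalling n D y.2)) := by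
  rw [← sum_antidiagonal_fst_antidiagonal fun y s t => qRising n (p - A) y *
    qRising n (p + 1) y * invFacSub n (p + y) k / (qfac n y * qRising n (C + 2) y) *
      (qRising n (A - k - p) s * qRising n (B - j + 1) t /
        (qfac n s * qfac n t * qRising n (C + 2 + y) s * qFalling n D t)), racahSum, mul_sum]
  refine sum_congr rfl fun x hx => ?_
  have hx : x.1 + x.2 = q := by simpa using hx
  have hexpand := invFacSub_mul_qRising_eq_sum A p hk (show x.1 < n by omega) (by omega)
  calc
    _ = (∑ y ∈ antidiagonal x.1, qRising n (p - A) y.1 * qRising n (p + 1) y.1 *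
          qRising n (A - k - p) y.2 * invFacSub n (p + y.1) k / (qfac n y.1 * qfac n y.2)) *
        (qRising n (B - j + 1) x.2 / (qfac n x.2 * qRising n (C + 2) x.1 * qFalling n D x.2)) := by
      rw [← hexpand]
      ring
    _ = _ := by
      rw [sum_mul]
      refine sum_congr rfl fun y hy => ?_
      rw [← HasAntidiagonal.mem_antidiagonal.1 hy, qRising_add n (C + 2)]
      ring

lemma qfac_mul_racahSum {n p q j k : ℕ} {A B C D : ℂ} (hC : C ∈ integerComplement)
    (hD : D ∈ integerComplement) (hq : q < n) (hj : j < n) (hk : k < n) (hN : p + q = j + k)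
    (hABCD : C = A + B + D - 2 * (p + q)) :
    qfac n k * racahSum n A B C D p q j k * qRising n (C + 2) q =
      ∑ x ∈ antidiagonal q, qRising n (p - A) x.1 * qRising n (p + 1) x.1 *
        invFacSub n (p + x.1) k * qRising n (B + D - 2 * (p + q) + 2 + k + p + x.1) x.2 *
        qRising n (A + B - 2 * (p + q) + 1 + q) x.2 /
          (qfac n x.1 * qfac n x.2 * qFalling n D x.2) := by
  have : NeZero n := ⟨by omega⟩
  have hNℂ : (p : ℂ) + q = j + k := by exact_mod_cast hN
  have hC2 (y : ℕ) : C + 2 + y ∈ integerComplement := by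
    simpa [add_assoc] using (add_intCast_mem_integerComplement (2 + y : ℤ)).2 hC
  rw [qfac_mul_racahSum_eq_sum_sum A B C D hq hj hk hN, sum_mul]
  refine sum_congr rfl fun x hx => ?_
  obtain ⟨y, w⟩ := x
  obtain rfl : y + w = q := by simpa using hx
  have hinner := sum_saalschutz_div (A - k - p) (hC2 y) hD (show w < n by omega)
  have hCy : qRising n (C + 2) y ≠ 0 := by simpa using qRising_ne_zero n (hC2 0) y
  have hCw := qRising_ne_zero n (hC2 y) w
  push_cast at hABCD hNℂ ⊢
  rw [show C + 2 + y - (A - k - p) - D + w - 1 = B - j + 1 by linear_combination hABCD - hNℂ,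
    show C + 2 + y - D + w - 1 = A + B - 2 * (p + (y + w)) + 1 + (y + w) by
      linear_combination hABCD,
    show C + 2 + y - (A - k - p) = B + D - 2 * (p + (y + w)) + 2 + k + p + y by
      linear_combination hABCD] at hinner
  rw [← mul_sum, hinner, qRising_add]
  field_simp

/-! ### Bailey inversion -/

/-- The lower triangular matrix of the Bailey transform relative to `τ`. -/
def baileyCoeff (n : ℕ) (τ : ℂ) (u k : ℕ) : ℂ :=
  invFacSub n u k / qRising n τ (u + k + 1)

/-- The inverse of the matrix `baileyCoeff`. -/
def baileyInvCoeff (n : ℕ) (τ : ℂ) (k v : ℕ) : ℂ :=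
  (-1) ^ (k + v) * qn n (τ + 2 * k) * invFacSub n k v * qRising n τ (k + v)

section BaileyInversion

variable {n u v : ℕ} {τ : ℂ}

lemma baileyCoeff_of_lt (h : u < v) : baileyCoeff n τ u v = 0 := by
  rw [baileyCoeff, invFacSub_of_lt h, zero_div]

lemma baileyInvCoeff_of_lt (h : u < v) : baileyInvCoeff n τ u v = 0 := by
  rw [baileyInvCoeff, invFacSub_of_lt h, mul_zero, zero_mul]

lemma qn_add_mul_qn_add_two_mul (n : ℕ) (t i l : ℂ) :
    qn n (i + l) * qn n (t + 2 * i) = qn n i * qn n (t + 2 * i + l) + qn n l * qn n (t + i) := by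
  simp only [qn, xic_neg, xic_add, two_mul]
  field_simp
  ring

lemma qn_add_mul_qn_div_qRising [NeZero n] (hτ : τ ∈ integerComplement) (i l : ℕ) :
    qn n (i + l) * qn n (τ + 2 * i) / qRising n (τ + i) (i + l + 1) =
      qn n i / qRising n (τ + i) (i + l) + qn n l / qRising n (τ + i + 1) (i + l) := by
  have hτi : τ + i ∈ integerComplement := by
    exact_mod_cast (add_intCast_mem_integerComplement i).2 hτ
  have hR := qRising_ne_zero n hτi (i + l + 1)
  have hR' := qRising_ne_zero n hτi (i + l)
  have hrise' := qRising_succ' n (τ + i) (i + l)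
  have hrise := qRising_succ n (τ + i) (i + l)
  rw [show τ + i + (i + l : ℕ) = τ + 2 * i + l by push_cast; ring] at hrise
  have htail : qRising n (τ + i + 1) (i + l) ≠ 0 := right_ne_zero_of_mul (hrise' ▸ hR)
  rw [qn_add_mul_qn_add_two_mul, add_div]
  congr 1
  · rw [div_eq_div_iff hR hR', hrise]
    ring
  · rw [div_eq_div_iff hR htail, hrise']
    ring

lemma sum_neg_one_pow_mul_qn_div_eq_zero {m : ℕ} (hτ : τ ∈ integerComplement) (hm : m + 1 < n) :
    ∑ x ∈ antidiagonal (m + 1), (-1) ^ x.1 * qn n (τ + 2 * x.1) /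
      (qfac n x.1 * qfac n x.2 * qRising n (τ + x.1) (m + 2)) = 0 := by
  have : NeZero n := ⟨by omega⟩
  have hm' := qn_succ_ne_zero hm
  have hsplit (i l : ℕ) (h : i + l = m + 1) :
      qn n (m + 1) * ((-1) ^ i * qn n (τ + 2 * i) /
        (qfac n i * qfac n l * qRising n (τ + i) (m + 2))) =
      (-1) ^ i / (qfac n i * qfac n l) *
        (qn n i / qRising n (τ + i) (m + 1) + qn n l / qRising n (τ + (i + 1 : ℕ)) (m + 1)) := by
    have hpartial := qn_add_mul_qn_div_qRising (n := n) hτ i l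
    rw [h, show (i : ℂ) + l = m + 1 by exact_mod_cast h] at hpartial
    rw [Nat.cast_succ, ← add_assoc, ← hpartial]
    ring
  rw [← mul_right_inj' hm', mul_zero, mul_sum, sum_antidiagonal_succ_eq_sum_add
    (F := fun i l => qn n (m + 1) * ((-1) ^ i * qn n (τ + 2 * i) /
      (qfac n i * qfac n l * qRising n (τ + i) (m + 2))))
    (P := fun i l => -((-1) ^ i / (qfac n i * qfac n l * qRising n (τ + (i + 1 : ℕ)) (m + 1))))
    (Q := fun i l => (-1) ^ i / (qfac n i * qfac n l * qRising n (τ + (i + 1 : ℕ)) (m + 1)))]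
  · simp
  · rw [hsplit _ _ (zero_add _), qfac_succ]
    simp only [Nat.cast_zero, qn_zero, Nat.cast_succ]
    field_simp
    ring
  · rw [hsplit _ _ (add_zero _), qfac_succ]
    simp only [Nat.cast_zero, qn_zero, Nat.cast_succ, pow_succ]
    field_simp
    ring
  · rintro i l rfl
    have hi := qn_succ_ne_zero (n := n) (k := i) (by omega)
    have hl := qn_succ_ne_zero (n := n) (k := l) (by omega)
    rw [hsplit _ _ (by ring), qfac_succ, qfac_succ, pow_succ]
    simp only [Nat.cast_succ]
    field_simp
    ring

lemma sum_range_eq_sum_antidiagonal {M : Type*} [AddCommMonoid M] {v m : ℕ} {f : ℕ → M}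
    (hn : v + m < n) (hf : ∀ k, k < v ∨ v + m < k → f k = 0) :
    ∑ k ∈ range n, f k = ∑ x ∈ antidiagonal m, f (v + x.1) := by
  refine (sum_of_injOn (fun x : ℕ × ℕ => v + x.1) ?_ ?_ ?_ fun _ _ => rfl).symm
  · intro x hx y hy hxy
    have hx : x.1 + x.2 = m := by simpa using hx
    have hy : y.1 + y.2 = m := by simpa using hy
    grind
  · intro x hx
    have hx : x.1 + x.2 = m := by simpa using hx
    simpa using (show v + x.1 < n by omega)
  · intro k _ hk
    refine hf k ?_
    by_contra! h
    exact hk ⟨(k - v, v + m - k), by simp; omega, by dsimp only; omega⟩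

lemma baileyCoeff_mul_baileyInvCoeff [NeZero n] (hτ : τ ∈ integerComplement) (v i l : ℕ) :
    baileyCoeff n τ (v + (i + l)) (v + i) * baileyInvCoeff n τ (v + i) v =
      (-1) ^ i * qn n (τ + 2 * v + 2 * i) /
        (qfac n i * qfac n l * qRising n (τ + 2 * v + i) (i + l + 1)) := by
  have hrise : qRising n τ (v + (i + l) + (v + i) + 1) =
      qRising n τ (i + 2 * v) * qRising n (τ + 2 * v + i) (i + l + 1) := by
    rw [show v + (i + l) + (v + i) + 1 = i + 2 * v + (i + l + 1) by ring, qRising_add]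
    push_cast
    ring_nf
  have hRτ := qRising_ne_zero n hτ (i + 2 * v)
  rw [baileyCoeff, baileyInvCoeff, ← add_assoc v i l, invFacSub_add_left, add_assoc v i l,
    invFacSub_add_left, hrise, show v + i + v = i + 2 * v by ring, pow_add, pow_mul]
  push_cast
  field_simp
  ring_nf

lemma sum_baileyCoeff_mul_baileyInvCoeff (hτ : τ ∈ integerComplement) (hu : u < n) :
    ∑ k ∈ range n, baileyCoeff n τ u k * baileyInvCoeff n τ k v = if u = v then 1 else 0 := by
  have : NeZero n := ⟨by omega⟩
  obtain huv | hvu := lt_or_ge u v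
  · rw [if_neg huv.ne]
    refine sum_eq_zero fun k _ => ?_
    obtain huk | hku := lt_or_ge u k
    · rw [baileyCoeff_of_lt huk, zero_mul]
    · rw [baileyInvCoeff_of_lt (hku.trans_lt huv), mul_zero]
  obtain ⟨m, rfl⟩ := exists_add_of_le hvu
  have hτv : τ + 2 * v ∈ integerComplement := by
    exact_mod_cast (add_intCast_mem_integerComplement (2 * v)).2 hτ
  rw [sum_range_eq_sum_antidiagonal hu]
  · have hterm (x : ℕ × ℕ) (hx : x ∈ antidiagonal m) :
        baileyCoeff n τ (v + m) (v + x.1) * baileyInvCoeff n τ (v + x.1) v =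
          (-1) ^ x.1 * qn n (τ + 2 * v + 2 * x.1) /
            (qfac n x.1 * qfac n x.2 * qRising n (τ + 2 * v + x.1) (m + 1)) := by
      obtain ⟨i, l⟩ := x
      obtain rfl : i + l = m := by simpa using hx
      exact baileyCoeff_mul_baileyInvCoeff hτ v i l
    rw [sum_congr rfl hterm]
    obtain _ | m := m
    · have hqn := qn_ne_zero n hτv
      simp [qRising_succ, hqn]
    · rw [if_neg (by omega), sum_neg_one_pow_mul_qn_div_eq_zero hτv (by omega)]
  · rintro k (hk | hk)
    · rw [baileyInvCoeff_of_lt hk, mul_zero]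
    · rw [baileyCoeff_of_lt hk, zero_mul]

lemma sum_baileyInvCoeff_mul_baileyCoeff (hτ : τ ∈ integerComplement) (hu : u < n) (hv : v < n) :
    ∑ k ∈ range n, baileyInvCoeff n τ u k * baileyCoeff n τ k v = if u = v then 1 else 0 := by
  have hmul : (Matrix.of fun i j : Fin n => baileyCoeff n τ i j) *
      Matrix.of (fun i j : Fin n => baileyInvCoeff n τ i j) = 1 := by
    ext i j
    simp only [Matrix.mul_apply, Matrix.of_apply, Matrix.one_apply, Fin.ext_iff]
    rw [Fin.sum_univ_eq_sum_range fun k => baileyCoeff n τ i k * baileyInvCoeff n τ k j,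
      sum_baileyCoeff_mul_baileyInvCoeff hτ i.isLt]
  have happly := Matrix.ext_iff.2 (mul_eq_one_comm.1 hmul) ⟨u, hu⟩ ⟨v, hv⟩
  simp only [Matrix.mul_apply, Matrix.of_apply, Matrix.one_apply, Fin.ext_iff] at happly
  rwa [Fin.sum_univ_eq_sum_range fun k => baileyInvCoeff n τ u k * baileyCoeff n τ k v] at happly

end BaileyInversion

/-! ### The kernel of the 6j-matrix -/

/-- The pairs of natural numbers smaller than `n` with sum `N`; they index the summands of a tensor
product of two `n`-dimensional modules. -/
def antidiagonalLT (n N : ℕ) : Finset (ℕ × ℕ) :=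
  (antidiagonal N).filter fun x => x.1 < n ∧ x.2 < n

/-- The diagonal matrix between the two Bailey matrices in `sixjKernel`. -/
def kernelWeight (n : ℕ) (A D : ℂ) (x : ℕ × ℕ) : ℂ :=
  qfac n x.1 * qFalling n A x.1 / (qfac n x.2 * qFalling n D x.2)

/-- The matrix of 6j-symbols up to diagonal factors, with `A`, `B`, `D` twice the colours
`a`, `b`, `d`: an inverse Bailey matrix, a diagonal matrix and a Bailey matrix. -/
def sixjKernel (n : ℕ) (A B D : ℂ) (N q k : ℕ) : ℂ :=
  ∑ x ∈ antidiagonalLT n N, baileyInvCoeff n (A + B - 2 * N + 1) q x.2 *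
    kernelWeight n A D x * baileyCoeff n (B + D - 2 * N + 1) x.1 k

section Kernel

variable {n N : ℕ}

@[simp] lemma mem_antidiagonalLT {x : ℕ × ℕ} :
    x ∈ antidiagonalLT n N ↔ x.1 + x.2 = N ∧ x.1 < n ∧ x.2 < n := by
  simp [antidiagonalLT]

lemma sum_antidiagonalLT_snd {M : Type*} [AddCommMonoid M] {u v : ℕ} {f : ℕ → M} (hu : u < n)
    (huN : u ≤ N) (hv : N < n + v) (hf : ∀ k, k < v ∨ u < k → f k = 0) :
    ∑ x ∈ antidiagonalLT n N, f x.2 = ∑ k ∈ range n, f k := by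
  refine sum_of_injOn Prod.snd ?_ ?_ ?_ fun _ _ => rfl
  · rintro x hx y hy hxy
    have hxN := (mem_antidiagonalLT.1 hx).1
    have hyN := (mem_antidiagonalLT.1 hy).1
    grind
  · rintro x hx
    simpa using (mem_antidiagonalLT.1 hx).2.2
  · intro k _ hk'
    refine hf k ?_
    by_contra! h
    exact hk' ⟨(N - k, k), by simp; grind, rfl⟩

lemma sum_antidiagonalLT_baileyCoeff_mul_baileyInvCoeff {τ : ℂ} {u v : ℕ}
    (hτ : τ ∈ integerComplement) (hu : u < n) (huN : u ≤ N) (hv : N < n + v) :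
    ∑ x ∈ antidiagonalLT n N, baileyCoeff n τ u x.2 * baileyInvCoeff n τ x.2 v =
      if u = v then 1 else 0 := by
  rw [← sum_baileyCoeff_mul_baileyInvCoeff hτ hu]
  refine sum_antidiagonalLT_snd (f := fun k => baileyCoeff n τ u k * baileyInvCoeff n τ k v)
    hu huN hv ?_
  rintro k (hk | hk)
  · rw [baileyInvCoeff_of_lt hk, mul_zero]
  · rw [baileyCoeff_of_lt hk, zero_mul]

lemma sum_antidiagonalLT_baileyInvCoeff_mul_baileyCoeff {τ : ℂ} {u v : ℕ}
    (hτ : τ ∈ integerComplement) (hu : u < n) (huN : u ≤ N) (hv : v < n) (hvN : N < n + v) :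
    ∑ x ∈ antidiagonalLT n N, baileyInvCoeff n τ u x.2 * baileyCoeff n τ x.2 v =
      if u = v then 1 else 0 := by
  rw [← sum_baileyInvCoeff_mul_baileyCoeff hτ hu hv]
  refine sum_antidiagonalLT_snd (f := fun k => baileyInvCoeff n τ u k * baileyCoeff n τ k v)
    hu huN hvN ?_
  rintro k (hk | hk)
  · rw [baileyCoeff_of_lt hk, mul_zero]
  · rw [baileyInvCoeff_of_lt hk, zero_mul]

lemma kernelWeight_mul_swap {A D : ℂ} (hA : A ∈ integerComplement) (hD : D ∈ integerComplement)
    {x : ℕ × ℕ} (hx : x ∈ antidiagonalLT n N) :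
    kernelWeight n A D x * kernelWeight n D A x.swap = 1 := by
  obtain ⟨-, hfst, hsnd⟩ := mem_antidiagonalLT.1 hx
  have : NeZero n := ⟨by omega⟩
  have hqfst := qfac_ne_zero hfst
  have hqsnd := qfac_ne_zero hsnd
  have hFA := qFalling_ne_zero n hA x.1
  have hFD := qFalling_ne_zero n hD x.2
  simp only [kernelWeight, Prod.fst_swap, Prod.snd_swap]
  field_simp

lemma sub_two_mul_natCast_add_one_mem_integerComplement {z : ℂ} (hz : z ∈ integerComplement)
    (N : ℕ) : z - 2 * N + 1 ∈ integerComplement := by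
  rw [show z - 2 * N + 1 = z + ((1 - 2 * N : ℤ) : ℂ) by push_cast; ring]
  exact (add_intCast_mem_integerComplement _).2 hz

lemma sum_baileyCoeff_mul_sixjKernel {A B D : ℂ} (hBD : B + D ∈ integerComplement) (l : ℕ)
    {s : ℕ × ℕ} (hs : s ∈ antidiagonalLT n N) :
    ∑ z ∈ antidiagonalLT n N,
        baileyCoeff n (B + D - 2 * N + 1) s.1 z.2 * sixjKernel n D B A N z.2 l =
      kernelWeight n D A s.swap * baileyCoeff n (B + A - 2 * N + 1) s.2 l := by
  obtain ⟨hsN, hs₁, hs₂⟩ := mem_antidiagonalLT.1 hs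
  have hβ := sub_two_mul_natCast_add_one_mem_integerComplement hBD N
  simp only [sixjKernel, mul_sum, add_comm D B]
  rw [sum_comm]
  have hcollapse (t : ℕ × ℕ) (ht : t ∈ antidiagonalLT n N) :
      ∑ z ∈ antidiagonalLT n N, baileyCoeff n (B + D - 2 * N + 1) s.1 z.2 *
          (baileyInvCoeff n (B + D - 2 * N + 1) z.2 t.2 * kernelWeight n D A t *
            baileyCoeff n (B + A - 2 * N + 1) t.1 l) =
        if s.swap = t then
          kernelWeight n D A t * baileyCoeff n (B + A - 2 * N + 1) t.1 l else 0 := by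
    obtain ⟨htN, ht₁, -⟩ := mem_antidiagonalLT.1 ht
    have hst : s.1 = t.2 ↔ s.swap = t := by grind [Prod.swap]
    simp only [← mul_assoc, ← sum_mul]
    rw [sum_antidiagonalLT_baileyCoeff_mul_baileyInvCoeff hβ hs₁ (by omega) (by omega),
      if_congr hst rfl rfl, ite_mul, ite_mul, one_mul, zero_mul, zero_mul]
  rw [sum_congr rfl hcollapse, sum_ite_eq, if_pos (by grind [mem_antidiagonalLT]), Prod.fst_swap]

theorem sum_sixjKernel_mul_sixjKernel {A B D : ℂ} (hA : A ∈ integerComplement)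
    (hD : D ∈ integerComplement) (hAB : A + B ∈ integerComplement)
    (hBD : B + D ∈ integerComplement) {x y : ℕ × ℕ} (hx : x ∈ antidiagonalLT n N)
    (hy : y ∈ antidiagonalLT n N) :
    ∑ z ∈ antidiagonalLT n N, sixjKernel n A B D N x.2 z.2 * sixjKernel n D B A N z.2 y.2 =
      if x = y then 1 else 0 := by
  obtain ⟨hxN, -, hx₂⟩ := mem_antidiagonalLT.1 hx
  obtain ⟨hyN, hy₁, hy₂⟩ := mem_antidiagonalLT.1 hy
  have hα := sub_two_mul_natCast_add_one_mem_integerComplement hAB N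
  have hxy : x.2 = y.2 ↔ x = y := by grind
  calc _ = ∑ s ∈ antidiagonalLT n N, baileyInvCoeff n (A + B - 2 * N + 1) x.2 s.2 *
        kernelWeight n A D s * ∑ z ∈ antidiagonalLT n N,
          baileyCoeff n (B + D - 2 * N + 1) s.1 z.2 * sixjKernel n D B A N z.2 y.2 := by
        simp only [mul_sum]
        rw [sum_comm]
        refine sum_congr rfl fun z _ => ?_
        rw [sixjKernel, sum_mul]
        simp only [mul_assoc]
    _ = ∑ s ∈ antidiagonalLT n N, baileyInvCoeff n (A + B - 2 * N + 1) x.2 s.2 *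
        baileyCoeff n (A + B - 2 * N + 1) s.2 y.2 := by
        refine sum_congr rfl fun s hs => ?_
        rw [sum_baileyCoeff_mul_sixjKernel hBD _ hs, add_comm B A, mul_assoc,
          ← mul_assoc (kernelWeight n A D s), kernelWeight_mul_swap hA hD hs, one_mul]
    _ = if x = y then 1 else 0 := by
        rw [sum_antidiagonalLT_baileyInvCoeff_mul_baileyCoeff hα hx₂ (by omega) hy₂ (by omega),
          if_congr hxy rfl rfl]

end Kernel

/-! ### Factorization of the 6j-symbol -/

section Factorization

variable {n p q j k : ℕ}

lemma sum_antidiagonal_add_eq_sum_antidiagonal {M : Type*} [AddCommMonoid M] {f : ℕ → ℕ → M}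
    (hf : ∀ i l, q < l → f i l = 0) :
    ∑ x ∈ antidiagonal (p + q), f x.1 x.2 = ∑ x ∈ antidiagonal q, f (p + x.1) x.2 := by
  refine (sum_of_injOn (fun x : ℕ × ℕ => (p + x.1, x.2)) ?_ ?_ ?_ fun _ _ => rfl).symm
  · rintro ⟨x₁, x₂⟩ _ ⟨y₁, y₂⟩ _ hxy
    simpa using hxy
  · rintro ⟨x₁, x₂⟩ hx
    have hx : x₁ + x₂ = q := by simpa using hx
    simpa using (show p + x₁ + x₂ = p + q by omega)
  · rintro ⟨x₁, x₂⟩ hx hx'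
    refine hf _ _ ?_
    by_contra! h
    have hx : x₁ + x₂ = p + q := by simpa using hx
    exact hx' ⟨(x₁ - p, x₂), by simp; omega, by dsimp only; congr 1; omega⟩

lemma sixjKernel_eq_sum_antidiagonal (A B D : ℂ) (hq : q < n) :
    sixjKernel n A B D (p + q) q k = ∑ x ∈ antidiagonal q,
      baileyInvCoeff n (A + B - 2 * (p + q : ℕ) + 1) q x.2 * kernelWeight n A D (p + x.1, x.2) *
        baileyCoeff n (B + D - 2 * (p + q : ℕ) + 1) (p + x.1) k := by
  have : NeZero n := ⟨by omega⟩
  have hlower (i l : ℕ) (hl : q < l) :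
      baileyInvCoeff n (A + B - 2 * (p + q : ℕ) + 1) q l * kernelWeight n A D (i, l) *
        baileyCoeff n (B + D - 2 * (p + q : ℕ) + 1) i k = 0 := by
    rw [baileyInvCoeff_of_lt hl, zero_mul, zero_mul]
  rw [← sum_antidiagonal_add_eq_sum_antidiagonal hlower, sixjKernel, antidiagonalLT]
  refine sum_filter_of_ne fun x _ hx => ?_
  contrapose! hx
  obtain hql | hlq := lt_or_ge q x.2
  · exact hlower _ _ hql
  · rw [kernelWeight, qfac_eq_zero (not_lt.1 fun h => absurd (hx h) (by omega))]
    simp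

lemma sixjKernel_mul_qRising {A B C D : ℂ} (hC : C ∈ integerComplement)
    (hD : D ∈ integerComplement) (hBD : B + D ∈ integerComplement) (hq : q < n) (hj : j < n)
    (hk : k < n) (hN : p + q = j + k) (hABCD : C = A + B + D - 2 * (p + q)) :
    sixjKernel n A B D (p + q) q k * qRising n (B + D - 2 * (p + q : ℕ) + 1) (p + q + k + 1) =
      qn n (A + B - 2 * (p + q : ℕ) + 1 + 2 * q) * qRising n (A + B - 2 * (p + q : ℕ) + 1) q *
        qfac n p * qFalling n A p * (qfac n k * racahSum n A B C D p q j k *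
          qRising n (C + 2) q) := by
  have : NeZero n := ⟨by omega⟩
  rw [qfac_mul_racahSum hC hD hq hj hk hN hABCD, sixjKernel_eq_sum_antidiagonal A B D hq,
    sum_mul, mul_sum]
  refine sum_congr rfl fun x hx => ?_
  obtain ⟨y, w⟩ := x
  obtain rfl : y + w = q := by simpa using hx
  have hτ := sub_two_mul_natCast_add_one_mem_integerComplement hBD (p + (y + w))
  have hR := qRising_ne_zero n hτ (p + y + k + 1)
  have hsign : (-1 : ℂ) ^ (y + w + w) = (-1) ^ y := by
    rw [add_assoc, ← two_mul, pow_add, pow_mul]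
    norm_num
  have hrise : qRising n (p - A) y = (-1) ^ y * qFalling n (A - p) y := by
    rw [← qRising_neg, neg_sub]
  have hB : qRising n (B + D - 2 * (p + (y + w) : ℕ) + 1) (p + (y + w) + k + 1) =
      qRising n (B + D - 2 * (p + (y + w) : ℕ) + 1) (p + y + k + 1) *
        qRising n (B + D - 2 * (p + (y + w : ℕ)) + 2 + k + p + y) w := by
    rw [show p + (y + w) + k + 1 = p + y + k + 1 + w by ring, qRising_add]
    push_cast
    ring_nf
  rw [baileyInvCoeff, baileyCoeff, kernelWeight, hsign, hB, hrise, invFacSub_eq y (by ring),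
    qRising_add n _ (y + w) w, qfac_add n p y, qFalling_add n A p y, mul_assoc,
    ← mul_assoc (_ / _), div_mul_cancel₀ _ hR]
  push_cast
  ring

lemma qRising_mul_qFalling_mul_racahSum {A B C D : ℂ} (hC : C ∈ integerComplement)
    (hD : D ∈ integerComplement) (hq : q < n) (hN : p + q = j + k) :
    qRising n (C + 2) k * qFalling n D j * racahSum n A B C D p q j k =
      ∑ z ∈ Icc (q - j) (min q k), (-1) ^ z * (qRising n (C + 2 + z) (k - z) / qfac n (k - z)) *
        (qRising n (A - k + 1) z / qfac n z) *
        (qRising n (B - j + 1) (q - z) / qfac n (q - z)) *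
        (qRising n (D - j + 1) (p + z - k) / qfac n (p + z - k)) := by
  have : NeZero n := ⟨by omega⟩
  have hC2 : C + 2 ∈ integerComplement := by
    exact_mod_cast (add_intCast_mem_integerComplement 2).2 hC
  rw [racahSum, Nat.sum_antidiagonal_eq_sum_range_succ_mk, mul_sum]
  symm
  refine sum_subset_zero_on_sdiff (fun z hz => by grind) (fun z hz => ?_) fun z hz => ?_
  · obtain h | h : p + z < k ∨ k < z := by grind
    all_goals simp [invFacSub_of_lt h]
  · obtain ⟨hjz, hzq, hzk⟩ : q - j ≤ z ∧ z ≤ q ∧ z ≤ k := by grind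
    obtain ⟨l, rfl⟩ := exists_add_of_le hzk
    obtain ⟨w, rfl⟩ := exists_add_of_le hzq
    obtain ⟨r, rfl⟩ : ∃ r, j = w + r := exists_add_of_le (by omega)
    have hRz := qRising_ne_zero n hC2 z
    have hFw := qFalling_ne_zero n hD w
    rw [invFacSub_add_left, invFacSub_eq r (by omega), qRising_add, qFalling_add,
      qFalling_eq_qRising n (D - w), show p + z - (z + l) = r by omega,
      Nat.add_sub_cancel_left, Nat.add_sub_cancel_left]
    push_cast
    rw [show D - w - r + 1 = D - (w + r) + 1 by ring]
    field_simp

lemma qFalling_sub_mul_qRising (E : ℂ) (q : ℕ) (hp : p < n) :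
    qFalling n E (n - 1 - p) * qRising n (E - q + 1) (p + q + 1) =
      (-1) ^ (n - 1 - p) * qFalling n E q * (qn n (E + 1) * qRising n (E + 2) (n - 1)) := by
  have : NeZero n := ⟨by omega⟩
  obtain ⟨r, rfl⟩ : ∃ r, n = p + 1 + r := exists_add_of_le hp
  have hfall : qFalling (p + 1 + r) E r = (-1) ^ r * qRising (p + 1 + r) (E + p + 2) r := by
    rw [show E + p + 2 = E - r + 1 + (p + 1 + r : ℕ) by push_cast; ring,
      qRising_add_natCast_self, ← qFalling_eq_qRising, ← mul_assoc, ← mul_pow]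
    norm_num
  have hrise : qRising (p + 1 + r) (E + 1) (p + 1) * qRising (p + 1 + r) (E + p + 2) r =
      qn (p + 1 + r) (E + 1) * qRising (p + 1 + r) (E + 2) (p + r) := by
    rw [show E + 2 = E + 1 + 1 by ring, ← qRising_succ', show p + r + 1 = p + 1 + r by ring,
      qRising_add _ _ (p + 1) r]
    push_cast
    ring_nf
  rw [show p + 1 + r - 1 - p = r by omega, show p + 1 + r - 1 = p + r by omega,
    show p + q + 1 = q + (p + 1) by ring, qRising_add, ← qFalling_eq_qRising,
    show E - q + 1 + q = E + 1 by ring, hfall, ← hrise]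
  ring

lemma qFalling_div_mul_inv_qFalling_div {E : ℂ} (hE : E ∈ integerComplement) (hp : p < n)
    (hq : q < n) :
    qFalling n E (n - 1 - p) / qfac n (n - 1 - p) * (qFalling n E q / qfac n q)⁻¹ =
      (-1) ^ (n - 1 - p) * qbin n (E + n) (E + 1) *
        (qn n (E + 1) * qfac n p * qfac n q / qRising n (E - q + 1) (p + q + 1)) := by
  have : NeZero n := ⟨by omega⟩
  have hF := qFalling_ne_zero n hE q
  have hqp := qfac_ne_zero hp
  have hqq := qfac_ne_zero hq
  have hqn : qfac n (n - 1) ≠ 0 := qfac_ne_zero (by omega)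
  have hR : qRising n (E - q + 1) (p + q + 1) ≠ 0 := by
    rw [show E - q + 1 = E + ((1 - q : ℤ) : ℂ) by push_cast; ring]
    exact qRising_ne_zero n ((add_intCast_mem_integerComplement _).2 hE) _
  rw [eq_div_of_mul_eq hR (qFalling_sub_mul_qRising E q hp),
    eq_div_of_mul_eq hqp (qfac_sub_mul_qfac hp), qbin_add_natCast_self]
  field_simp

lemma add_eq_add_of_sub_eq {a b c d e f : ℂ} (habe : a + b - e = p) (hdec : d + e - c = q)
    (hbdf : b + d - f = j) (hafc : a + f - c = k) : p + q = j + k := by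
  have : (p + q : ℂ) = j + k := by rw [← habe, ← hdec, ← hbdf, ← hafc]; ring
  exact_mod_cast this

lemma sum_qbin_eq_racahSum {a b c d e f : ℂ} (hc : 2 * c ∈ integerComplement)
    (hd : 2 * d ∈ integerComplement) (hq : q < n) (hj : j < n) (hk : k < n)
    (habe : a + b - e = p) (hdec : d + e - c = q) (hbdf : b + d - f = j) (hafc : a + f - c = k) :
    ∑ z ∈ Icc (q - j) (min q k), (-1) ^ z * qbin n (a + f + c + 1) (2 * c + z + 1) *
        qbin n (a + c - f + z) (a + c - f) *
        qbin n (b + f - d + (d + e - c) - z) (b + f - d) *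
        qbin n (d + c - e + z) (d + f - b) =
      qRising n (2 * c + 2) k * qFalling n (2 * d) j *
        racahSum n (2 * a) (2 * b) (2 * c) (2 * d) p q j k := by
  have hN := add_eq_add_of_sub_eq habe hdec hbdf hafc
  rw [qRising_mul_qFalling_mul_racahSum hc hd hq hN]
  refine sum_congr rfl fun z hz => ?_
  obtain ⟨hjz, hzq, hzk⟩ : q - j ≤ z ∧ z ≤ q ∧ z ≤ k := by grind
  have hpzk : ((p + z - k : ℕ) : ℂ) = p + z - k := by
    rw [Nat.cast_sub (by omega), Nat.cast_add]
  rw [qbin_eq_qRising_div (k := k - z) (by omega)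
      (by rw [Nat.cast_sub hzk, ← hafc]; ring),
    qbin_eq_qRising_div (x := a + c - f + z) (k := z) (by omega) (by ring),
    qbin_eq_qRising_div (x := b + f - d + (d + e - c) - z) (k := q - z) (by omega)
      (by rw [Nat.cast_sub hzq, ← hdec]; ring),
    qbin_eq_qRising_div (x := d + c - e + z) (k := p + z - k) (by omega)
      (by rw [hpzk, ← habe, ← hafc]; ring),
    ← hafc, ← hbdf]
  ring_nf

lemma sixjtet_eq_racahSum {a b c d e f : ℂ} (hc : 2 * c ∈ integerComplement)
    (hd : 2 * d ∈ integerComplement) (hf : 2 * f ∈ integerComplement) (hp : p < n) (hq : q < n)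
    (hj : j < n) (hk : k < n)
    (habe : a + b - e = p) (hdec : d + e - c = q) (hbdf : b + d - f = j) (hafc : a + f - c = k) :
    sixjtet n a b e d c f = (-1) ^ (n - 1 + k) * (qfac n q * qfac n p / (qfac n j * qfac n k)) *
      (qFalling n (2 * e) (n - 1 - p) / qfac n (n - 1 - p)) *
      (qFalling n (2 * e) q / qfac n q)⁻¹ *
      (qRising n (2 * c + 2) k * qFalling n (2 * d) j *
        racahSum n (2 * a) (2 * b) (2 * c) (2 * d) p q j k) := by
  have : NeZero n := ⟨by omega⟩
  have hqbin := qbin_add_natCast_self_ne_zero n hf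
  rw [sixjtet, sixj, natIdx_eq habe, natIdx_eq hdec, natIdx_eq hbdf, natIdx_eq hafc,
    sum_qbin_eq_racahSum hc hd hq hj hk habe hdec hbdf hafc,
    qbin_eq_qFalling_div (x := 2 * e) (y := a + b + e + 1 - n) (k := n - 1 - p) (by omega)
      (by rw [Nat.cast_sub (by omega), Nat.cast_sub (by omega), ← habe]; push_cast; ring),
    qbin_eq_qFalling_div (x := 2 * e) (y := e + c - d) hq (by rw [← hdec]; ring)]
  simp only [mul_right_comm _ (qbin n (2 * f + n) (2 * f + 1))⁻¹, mul_inv_cancel_right₀ hqbin]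

/-- The diagonal factor relating `sixjtet` to `sixjKernel`, with `A`, `C`, `E` twice the colours
`a`, `c`, `e`. -/
def sixjNorm (n : ℕ) (A C E : ℂ) (p q : ℕ) : ℂ :=
  qRising n (C + 2) q * qFalling n A p * qRising n (E + 1 - 2 * q) (p + 2 * q + 1) /
    (qfac n p * qfac n q ^ 2)

lemma sixjKernel_mul_qRising_eq_racahSum {a b c d e f : ℂ} (hc : 2 * c ∈ integerComplement)
    (hd : 2 * d ∈ integerComplement) (hf : 2 * f ∈ integerComplement) (hq : q < n) (hj : j < n)
    (hk : k < n)
    (habe : a + b - e = p) (hdec : d + e - c = q) (hbdf : b + d - f = j) (hafc : a + f - c = k) :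
    sixjKernel n (2 * a) (2 * b) (2 * d) (p + q) q k *
        qRising n (2 * f + 1 - 2 * k) (j + 2 * k + 1) =
      qn n (2 * e + 1) * qRising n (2 * e + 1 - 2 * q) q * qfac n p * qFalling n (2 * a) p *
        (qfac n k * racahSum n (2 * a) (2 * b) (2 * c) (2 * d) p q j k *
          qRising n (2 * c + 2) q) := by
  have hN := add_eq_add_of_sub_eq habe hdec hbdf hafc
  have hBD : 2 * b + 2 * d ∈ integerComplement := by
    rw [show 2 * b + 2 * d = 2 * f + ((2 * j : ℤ) : ℂ) by push_cast; rw [← hbdf]; ring]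
    exact (add_intCast_mem_integerComplement _).2 hf
  have hτe : 2 * a + 2 * b - 2 * (p + q : ℕ) + 1 = 2 * e + 1 - 2 * q := by
    push_cast
    rw [← habe]
    ring
  have hτf : 2 * b + 2 * d - 2 * (p + q : ℕ) + 1 = 2 * f + 1 - 2 * k := by
    rw [hN]
    push_cast
    rw [← hbdf]
    ring
  have hkernel := sixjKernel_mul_qRising (A := 2 * a) (B := 2 * b) hc hd hBD hq hj hk hN
    (by rw [← habe, ← hdec]; ring)
  rwa [hτe, hτf, sub_add_cancel, show p + q + k + 1 = j + 2 * k + 1 by omega] at hkernel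

lemma sixjNorm_ne_zero {A C E : ℂ} (hA : A ∈ integerComplement) (hC : C ∈ integerComplement)
    (hE : E ∈ integerComplement) (hp : p < n) (hq : q < n) : sixjNorm n A C E p q ≠ 0 := by
  have : NeZero n := ⟨by omega⟩
  have hC2 : C + 2 ∈ integerComplement := by
    exact_mod_cast (add_intCast_mem_integerComplement 2).2 hC
  have hE2 : E + 1 - 2 * q ∈ integerComplement := by
    rw [show E + 1 - 2 * q = E + ((1 - 2 * q : ℤ) : ℂ) by push_cast; ring]
    exact (add_intCast_mem_integerComplement _).2 hE
  exact div_ne_zero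
    (mul_ne_zero (mul_ne_zero (qRising_ne_zero n hC2 q) (qFalling_ne_zero n hA p))
      (qRising_ne_zero n hE2 _))
    (mul_ne_zero (qfac_ne_zero hp) (pow_ne_zero 2 (qfac_ne_zero hq)))

theorem sixjtet_eq_sixjKernel {a b c d e f : ℂ} (ha : 2 * a ∈ integerComplement)
    (hc : 2 * c ∈ integerComplement) (hd : 2 * d ∈ integerComplement)
    (he : 2 * e ∈ integerComplement) (hf : 2 * f ∈ integerComplement) (hp : p < n) (hq : q < n)
    (hj : j < n) (hk : k < n)
    (habe : a + b - e = p) (hdec : d + e - c = q) (hbdf : b + d - f = j) (hafc : a + f - c = k) :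
    sixjtet n a b e d c f = (-1) ^ (p + k) * qbin n (2 * e + n) (2 * e + 1) *
      (sixjNorm n (2 * d) (2 * c) (2 * f) j k / sixjNorm n (2 * a) (2 * c) (2 * e) p q) *
      sixjKernel n (2 * a) (2 * b) (2 * d) (p + q) q k := by
  have : NeZero n := ⟨by omega⟩
  have hnorm : sixjNorm n (2 * a) (2 * c) (2 * e) p q ≠ 0 := sixjNorm_ne_zero ha hc he hp hq
  have hqj := qfac_ne_zero hj
  have hqk := qfac_ne_zero hk
  have hqp := qfac_ne_zero hp
  have hqq := qfac_ne_zero hq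
  have hkernel := sixjKernel_mul_qRising_eq_racahSum hc hd hf hq hj hk habe hdec hbdf hafc
  have hsplit : qRising n (2 * e + 1 - 2 * q) (p + 2 * q + 1) =
      qRising n (2 * e + 1 - 2 * q) q * qRising n (2 * e - q + 1) (p + q + 1) := by
    rw [show p + 2 * q + 1 = q + (p + q + 1) by ring, qRising_add]
    ring_nf
  have hsign : (-1 : ℂ) ^ (n - 1 + k) * (-1) ^ (n - 1 - p) = (-1) ^ (p + k) := by
    rw [show n - 1 + k = n - 1 - p + (p + k) by omega, pow_add, mul_right_comm, ← mul_pow]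
    norm_num
  rw [sixjNorm, hsplit] at hnorm
  simp only [ne_eq, div_eq_zero_iff, mul_eq_zero, not_or] at hnorm
  obtain ⟨⟨⟨hc₁, ha₁⟩, he₁, he₂⟩, -⟩ := hnorm
  rw [sixjtet_eq_racahSum hc hd hf hp hq hj hk habe hdec hbdf hafc, mul_assoc (_ * _) (_ / _),
    qFalling_div_mul_inv_qFalling_div he hp hq, ← hsign, sixjNorm, sixjNorm, hsplit]
  -- `field_simp` would otherwise normalize the arguments of these products.
  generalize qRising n (2 * c + 2) k = C₁, qRising n (2 * c + 2) q = C₂,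
    qRising n (2 * e + 1 - 2 * q) q = E₁, qRising n (2 * e - q + 1) (p + q + 1) = E₂,
    qRising n (2 * f + 1 - 2 * k) (j + 2 * k + 1) = F, qFalling n (2 * d) j = D,
    qFalling n (2 * a) p = A, qbin n (2 * e + n) (2 * e + 1) = Q,
    sixjKernel n (2 * a) (2 * b) (2 * d) (p + q) q k = K at *
  field_simp
  linear_combination -(Q * C₁ * D) * hkernel

end Factorization

/-! ### Orthogonality for generic parameters -/

/-- The summand at `f` of the orthogonality relation. -/
def sixjtetPair (n : ℕ) (a b c d e g f : ℂ) : ℂ :=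
  (qbin n (2 * f + n) (2 * f + 1))⁻¹ * (qbin n (2 * g + n) (2 * g + 1))⁻¹ *
    sixjtet n a b e d c f * sixjtet n d b f a c g

section Orthogonality

variable {n p q j k p' q' : ℕ} {a b c d e f g : ℂ}

lemma two_mul_mem_integerComplement_iff_of_sub {x y : ℂ} (m : ℤ) (h : x - y = m) :
    2 * x ∈ integerComplement ↔ 2 * y ∈ integerComplement := by
  rw [show 2 * x = 2 * y + ((2 * m : ℤ) : ℂ) by push_cast; rw [← h]; ring,
    add_intCast_mem_integerComplement]

lemma sixjtetPair_eq_sixjKernel_mul_sixjKernel (ha : 2 * a ∈ integerComplement)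
    (hc : 2 * c ∈ integerComplement) (hd : 2 * d ∈ integerComplement)
    (he : 2 * e ∈ integerComplement) (hf : 2 * f ∈ integerComplement)
    (hg : 2 * g ∈ integerComplement) (hp : p < n) (hq : q < n) (hp' : p' < n) (hq' : q' < n)
    (hj : j < n) (hk : k < n) (habe : a + b - e = p) (hdec : d + e - c = q)
    (habg : a + b - g = p') (hdgc : d + g - c = q') (hbdf : b + d - f = j)
    (hafc : a + f - c = k) :
    sixjtetPair n a b c d e g f =
      (-1) ^ (q + q') * (qbin n (2 * e + n) (2 * e + 1) / qbin n (2 * g + n) (2 * g + 1)) *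
        (sixjNorm n (2 * a) (2 * c) (2 * g) p' q' / sixjNorm n (2 * a) (2 * c) (2 * e) p q) *
        (sixjKernel n (2 * a) (2 * b) (2 * d) (p + q) q k *
          sixjKernel n (2 * d) (2 * b) (2 * a) (p + q) k q') := by
  have : NeZero n := ⟨by omega⟩
  have hN := add_eq_add_of_sub_eq habe hdec hbdf hafc
  have hqbin := qbin_add_natCast_self_ne_zero n hf
  have hnorm := sixjNorm_ne_zero hd hc hf hj hk
  have hsign : (-1 : ℂ) ^ (p + k) * (-1) ^ (j + q') = (-1) ^ (q + q') := by
    rw [← pow_add, show p + k + (j + q') = 2 * p + (q + q') by omega, pow_add, pow_mul]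
    norm_num
  rw [sixjtetPair, sixjtet_eq_sixjKernel ha hc hd he hf hp hq hj hk habe hdec hbdf hafc,
    sixjtet_eq_sixjKernel hd hc ha hf hg hj hk hp' hq' (by rw [add_comm, hbdf]) hafc
      (by rw [add_comm, habg]) hdgc, ← hsign, hN]
  generalize qbin n (2 * f + n) (2 * f + 1) = Q, sixjNorm n (2 * d) (2 * c) (2 * f) j k = M at *
  field_simp

lemma sum_sixjtetPair_of_mem_integerComplement (ha : 2 * a ∈ integerComplement)
    (hc : 2 * c ∈ integerComplement) (hd : 2 * d ∈ integerComplement)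
    (he : 2 * e ∈ integerComplement) (hbd : 2 * (b + d) ∈ integerComplement)
    (hp : p < n) (hq : q < n) (hp' : p' < n) (hq' : q' < n) (habe : a + b - e = p)
    (hdec : d + e - c = q) (habg : a + b - g = p') (hdgc : d + g - c = q') :
    ∑ x ∈ antidiagonalLT n (p + q), sixjtetPair n a b c d e g (b + d - x.1) =
      if (p, q) = (p', q') then 1 else 0 := by
  have : NeZero n := ⟨by omega⟩
  have hN : p + q = p' + q' := by
    have : (p + q : ℂ) = p' + q' := by rw [← habe, ← hdec, ← habg, ← hdgc]; ring
    exact_mod_cast this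
  have hab : 2 * (a + b) ∈ integerComplement :=
    (two_mul_mem_integerComplement_iff_of_sub p habe).2 he
  have hg : 2 * g ∈ integerComplement :=
    (two_mul_mem_integerComplement_iff_of_sub p' habg).1 hab
  rw [mul_add] at hab
  have hterm (x : ℕ × ℕ) (hx : x ∈ antidiagonalLT n (p + q)) :=
    sixjtetPair_eq_sixjKernel_mul_sixjKernel (f := b + d - x.1) (j := x.1) (k := x.2) ha hc hd he
      ((two_mul_mem_integerComplement_iff_of_sub x.1 (sub_sub_cancel _ _)).1 hbd) hg hp hq hp' hq'
      (mem_antidiagonalLT.1 hx).2.1 (mem_antidiagonalLT.1 hx).2.2 habe hdec habg hdgc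
      (sub_sub_cancel _ _) (by
        have : (x.1 + x.2 : ℂ) = p + q := mod_cast (mem_antidiagonalLT.1 hx).1
        linear_combination habe + hdec - this)
  rw [sum_congr rfl hterm, ← mul_sum,
    sum_sixjKernel_mul_sixjKernel (x := (p, q)) (y := (p', q')) ha hd hab (by rwa [← mul_add])
      (by simp [hp, hq]) (by simp [hN, hp', hq'])]
  split_ifs with hpq
  · obtain ⟨rfl, rfl⟩ := Prod.mk.inj hpq
    obtain rfl : e = g := by linear_combination habg - habe
    rw [div_self (qbin_add_natCast_self_ne_zero n he), div_self (sixjNorm_ne_zero ha hc he hp hq),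
      ← two_mul, pow_mul]
    norm_num
  · exact mul_zero _

end Orthogonality

/-! ### Continuity in the parameters -/

section Continuity

variable {n : ℕ}

lemma continuous_qn (n : ℕ) : Continuous (qn n) := by
  unfold qn xic
  fun_prop

lemma continuous_qbin {X : Type*} [TopologicalSpace X] {F G : X → ℂ} {z : ℂ} (n : ℕ)
    (hF : Continuous F) (hFG : ∀ t, F t - G t = z) : Continuous fun t => qbin n (F t) (G t) := by
  by_cases hz : ∃ k : ℕ, k < n ∧ z = k
  · obtain ⟨k, hk, hz⟩ := hz
    simp only [fun t => qbin_eq_qFalling_div hk ((hFG t).trans hz), qFalling]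
    exact (continuous_finsetProd _ fun i _ =>
      (continuous_qn n).comp (hF.sub continuous_const)).div_const _
  · simp only [qbin, hFG, dif_neg hz]
    exact continuous_const

lemma continuous_sixjtet_add (n : ℕ) (a b e d c f : ℂ) :
    Continuous fun t => sixjtet n (a + t) (b - t) e (d + t) (c + t) f := by
  have hafc (t : ℂ) : a + t + f - (c + t) = a + f - c := by ring
  have hdec (t : ℂ) : d + t + e - (c + t) = d + e - c := by ring
  have habe (t : ℂ) : a + t + (b - t) = a + b := by ring
  have hbdf (t : ℂ) : b - t + (d + t) = b + d := by ring
  have hecd (t : ℂ) : e + (c + t) - (d + t) = e + c - d := by ring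
  simp only [sixjtet, sixj, hafc, hdec, habe, hbdf, hecd]
  refine .mul (.mul continuous_const (continuous_finsetSum _ fun z _ => ?_)) continuous_const
  refine .mul (.mul (.mul (.mul continuous_const ?_) ?_) ?_) ?_
  · exact continuous_qbin (z := a + f - c - z) n (by fun_prop) fun t => by ring
  · exact continuous_qbin (z := z) n (by fun_prop) fun t => by ring
  · exact continuous_qbin (z := d + e - c - z) n (by fun_prop) fun t => by ring
  · exact continuous_qbin (z := b - e + c - f + z) n (by fun_prop) fun t => by ring

lemma continuous_sixjtetPair_add (n : ℕ) (a b c d e g f : ℂ) :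
    Continuous fun t => sixjtetPair n (a + t) (b - t) (c + t) (d + t) e g f :=
  (continuous_const.mul (continuous_sixjtet_add n a b e d c f)).mul
    (continuous_sixjtet_add n d b f a c g)

lemma dense_setOf_two_mul_add_mem_integerComplement {s : Set ℂ} (hs : s.Countable) :
    Dense {t : ℂ | ∀ x ∈ s, 2 * (x + t) ∈ integerComplement} := by
  have hcountable (x : ℂ) : {t : ℂ | 2 * (x + t) ∉ integerComplement}.Countable := by
    refine ((Set.countable_range ((↑) : ℤ → ℂ)).preimage (f := fun t : ℂ => 2 * (x + t))
      fun t u htu => ?_).mono fun t ht => not_not.1 ht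
    simpa using htu
  convert (hs.biUnion fun x _ => hcountable x).dense_compl ℂ using 1
  ext t
  simp

lemma sum_sixjtetPair {p q p' q' : ℕ} {a b c d e g : ℂ} (he : 2 * e ∈ integerComplement)
    (hbd : 2 * (b + d) ∈ integerComplement) (hp : p < n) (hq : q < n) (hp' : p' < n)
    (hq' : q' < n) (habe : a + b - e = p) (hdec : d + e - c = q) (habg : a + b - g = p')
    (hdgc : d + g - c = q') :
    ∑ x ∈ antidiagonalLT n (p + q), sixjtetPair n a b c d e g (b + d - x.1) =
      if (p, q) = (p', q') then 1 else 0 := by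
  let S (t : ℂ) : ℂ := ∑ x ∈ antidiagonalLT n (p + q),
    sixjtetPair n (a + t) (b - t) (c + t) (d + t) e g (b + d - x.1)
  have hS : S = fun _ => if (p, q) = (p', q') then 1 else 0 := by
    refine Continuous.ext_on (dense_setOf_two_mul_add_mem_integerComplement
      (Set.toFinite {a, c, d}).countable)
      (continuous_finsetSum _ fun x _ => continuous_sixjtetPair_add n a b c d e g _)
      continuous_const fun t ht => ?_
    have hbdt : b - t + (d + t) = b + d := by ring
    have h := sum_sixjtetPair_of_mem_integerComplement (b := b - t) (g := g) (ht a (by simp))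
      (ht c (by simp)) (ht d (by simp)) he (hbdt.symm ▸ hbd) hp hq hp' hq' (by rw [← habe]; ring)
      (by rw [← hdec]; ring) (by rw [← habg]; ring) (by rw [← hdgc]; ring)
    rwa [hbdt] at h
  simpa [S] using congr_fun hS 0

end Continuity

/-! ### The orthogonality relation -/

lemma notHalfInt_iff {x : ℂ} : NotHalfInt x ↔ 2 * x ∈ integerComplement := by
  refine ⟨fun hx ⟨m, hm⟩ => hx m ?_, fun hx m hm => hx ⟨m, ?_⟩⟩
  · rw [hm]
    ring
  · rw [hm]
    ring

open Classical in
lemma sum_range_ite_inZn {M : Type*} [AddCommMonoid M] (n N : ℕ) (F : ℕ → M) :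
    ∑ j ∈ range n, (if InZn n (N - j) then F j else 0) = ∑ x ∈ antidiagonalLT n N, F x.1 := by
  have hInZn (j : ℕ) : InZn n (N - j) ↔ j ≤ N ∧ N - j < n := by
    refine ⟨fun ⟨k, hk, h⟩ => ?_, fun ⟨hj, h⟩ => ⟨N - j, h, (Nat.cast_sub hj).symm⟩⟩
    have : N = j + k := by exact_mod_cast sub_eq_iff_eq_add'.1 h
    omega
  rw [← sum_filter]
  symm
  refine sum_nbij' Prod.fst (fun j => (j, N - j)) ?_ ?_ ?_ ?_ ?_
  all_goals grind [mem_antidiagonalLT]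

open Classical in
theorem sixjtet_orthogonality_general (n : ℕ) (a b c d e g : ℂ)
    (he : NotHalfInt e) (hbd : NotHalfInt (b + d))
    (habe : InZn n (a + b - e)) (hdec : InZn n (d + e - c))
    (habg : InZn n (a + b - g)) (hdgc : InZn n (d + g - c)) :
    (∑ j ∈ Finset.range n,
        if InZn n (a + (b + d - (j : ℂ)) - c) then
          (qbin n (2 * (b + d - (j : ℂ)) + (n : ℂ)) (2 * (b + d - (j : ℂ)) + 1))⁻¹ *
            (qbin n (2 * g + (n : ℂ)) (2 * g + 1))⁻¹ *
            sixjtet n a b e d c (b + d - (j : ℂ)) *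
            sixjtet n d b (b + d - (j : ℂ)) a c g
        else 0)
      = if e = g then 1 else 0 := by
  obtain ⟨p, hp, habe⟩ := habe
  obtain ⟨q, hq, hdec⟩ := hdec
  obtain ⟨p', hp', habg⟩ := habg
  obtain ⟨q', hq', hdgc⟩ := hdgc
  have hN (j : ℂ) : a + (b + d - j) - c = (p + q : ℕ) - j := by
    push_cast
    linear_combination habe + hdec
  have heg : (p, q) = (p', q') ↔ e = g := by
    constructor
    · rintro ⟨⟩
      linear_combination habg - habe
    · rintro rfl
      have hpp' : (p : ℂ) = p' := habe.symm.trans habg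
      have hqq' : (q : ℂ) = q' := hdec.symm.trans hdgc
      exact Prod.ext (mod_cast hpp') (mod_cast hqq')
  simp only [hN]
  rw [sum_range_ite_inZn n (p + q), ← if_congr heg rfl rfl]
  exact sum_sixjtetPair (notHalfInt_iff.1 he) (notHalfInt_iff.1 hbd) hp hq hp' hq' habe hdec habg
    hdgc

open Classical in
theorem sixjtet_orthogonality (n : ℕ) (hn : 2 ≤ n) (a b c d e g : ℂ)
    (ha : NotHalfInt a) (hb : NotHalfInt b) (hc : NotHalfInt c) (hd : NotHalfInt d)
    (he : NotHalfInt e) (hg : NotHalfInt g) (hbd : NotHalfInt (b + d))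
    (habe : InZn n (a + b - e)) (hdec : InZn n (d + e - c))
    (habg : InZn n (a + b - g)) (hdgc : InZn n (d + g - c)) :
    (∑ j ∈ Finset.range n,
        if InZn n (a + (b + d - (j : ℂ)) - c) then
          (qbin n (2 * (b + d - (j : ℂ)) + (n : ℂ)) (2 * (b + d - (j : ℂ)) + 1))⁻¹ *
            (qbin n (2 * g + (n : ℂ)) (2 * g + 1))⁻¹ *
            sixjtet n a b e d c (b + d - (j : ℂ)) *
            sixjtet n d b (b + d - (j : ℂ)) a c g
        else 0)
      = if e = g then 1 else 0 :=
  sixjtet_orthogonality_general n a b c d e g he hbd habe hdec habg hdgc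

end
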